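/- Let ∂ᵢ(τ) denote the formal partial derivative ∂I₄/∂xᵢ of the Igusa quartic evaluated at (P₀(τ),…,P₄(τ)). For every τ ∈ H₂: Ξ₆[δ₁] = 6∂₀+2∂₁+2∂₂+2∂₃, Ξ₆[δ₂] = 6∂₀−2∂₁+2∂₂−2∂₃, Ξ₆[δ₃] = 6∂₀+2∂₁−2∂₂−2∂₃, Ξ₆[δ₄] = 6∂₀−2∂₁−2∂₂+2∂₃, Ξ₆[δ₅] = 4∂₁+2∂₄, Ξ₆[δ₆] = 4∂₁−2∂₄, Ξ₆[δ₇] = 4∂₂+2∂₄, Ξ₆[δ₈] = 4∂₂−2∂₄, Ξ₆[δ₉] = 4∂₃+2∂₄, Ξ₆[δ₁₀] = 4∂₃−2∂₄ (all evaluated at τ). -/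

import Mathlib

open scoped BigOperators

namespace TwoLoop

/-- 2×2 complex matrices. -/
abbrev Mat2 := Matrix (Fin 2) (Fin 2) ℂ

/-- The genus-2 Siegel upper half space: symmetric 2×2 complex matrices with
positive definite imaginary part. -/
def SiegelH2 : Set Mat2 := {τ | τ.transpose = τ ∧ (τ.map Complex.im).PosDef}

/-- A (half-integer) theta characteristic `[a;b]`, recorded by its rows `a, b ∈ {0,1}²`. -/
abbrev Char := (Fin 2 → ℤ) × (Fin 2 → ℤ)

/-- The theta constant `θ[a;b](τ) = Σ_{n ∈ ℤ²} exp(πi (n+a/2)ᵀ τ (n+a/2) + πi (n+a/2)·b)`. -/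
noncomputable def theta (κ : Char) (τ : Mat2) : ℂ :=
  ∑' n : Fin 2 → ℤ,
    Complex.exp ((Real.pi : ℂ) * Complex.I *
      ((∑ i, ∑ j, ((n i : ℂ) + (κ.1 i : ℂ) / 2) * τ i j * ((n j : ℂ) + (κ.1 j : ℂ) / 2))
        + ∑ i, ((n i : ℂ) + (κ.1 i : ℂ) / 2) * (κ.2 i : ℂ)))

/-- The ten even characteristics δ₁,…,δ₁₀. -/
def δev : Fin 10 → Char :=
  ![(![0,0], ![0,0]), (![0,0], ![0,1]), (![0,0], ![1,0]), (![0,0], ![1,1]),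
    (![0,1], ![0,0]), (![0,1], ![1,0]), (![1,0], ![0,0]), (![1,0], ![0,1]),
    (![1,1], ![0,0]), (![1,1], ![1,1])]

/-- The six odd characteristics ν₁,…,ν₆. -/
def νodd : Fin 6 → Char :=
  ![(![0,1], ![0,1]), (![1,0], ![1,0]), (![0,1], ![1,1]),
    (![1,0], ![1,1]), (![1,1], ![0,1]), (![1,1], ![1,0])]

/-- `Θ[ε](τ) = θ[ε;0](2τ)`. -/
noncomputable def Θf (ε : Fin 2 → ℤ) (τ : Mat2) : ℂ := theta (ε, ![0,0]) ((2 : ℂ) • τ)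

noncomputable def P0 (τ : Mat2) : ℂ :=
  Θf ![0,0] τ ^ 4 + Θf ![0,1] τ ^ 4 + Θf ![1,0] τ ^ 4 + Θf ![1,1] τ ^ 4
noncomputable def P1 (τ : Mat2) : ℂ :=
  2 * (Θf ![0,0] τ ^ 2 * Θf ![0,1] τ ^ 2 + Θf ![1,0] τ ^ 2 * Θf ![1,1] τ ^ 2)
noncomputable def P2 (τ : Mat2) : ℂ :=
  2 * (Θf ![0,0] τ ^ 2 * Θf ![1,0] τ ^ 2 + Θf ![0,1] τ ^ 2 * Θf ![1,1] τ ^ 2)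
noncomputable def P3 (τ : Mat2) : ℂ :=
  2 * (Θf ![0,0] τ ^ 2 * Θf ![1,1] τ ^ 2 + Θf ![0,1] τ ^ 2 * Θf ![1,0] τ ^ 2)
noncomputable def P4 (τ : Mat2) : ℂ :=
  4 * (Θf ![0,0] τ * Θf ![0,1] τ * Θf ![1,0] τ * Θf ![1,1] τ)

/-- The vector `(P₀,…,P₄)`. -/
noncomputable def Pv : Fin 5 → Mat2 → ℂ := ![P0, P1, P2, P3, P4]

open MvPolynomial in
/-- The Igusa quartic as a polynomial in `x₀,…,x₄`. -/
noncomputable def I4poly : MvPolynomial (Fin 5) ℂ :=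
  X 4 ^ 4 + X 4 ^ 2 * X 0 ^ 2 - X 4 ^ 2 * X 1 ^ 2 - X 4 ^ 2 * X 2 ^ 2 - X 4 ^ 2 * X 3 ^ 2
    + X 1 ^ 2 * X 2 ^ 2 + X 1 ^ 2 * X 3 ^ 2 + X 2 ^ 2 * X 3 ^ 2
    - 2 * (X 0 * X 1 * X 2 * X 3)

/-- The signature `⟨κ|λ⟩ = exp(πi(a_κ·b_λ − b_κ·a_λ))`. -/
noncomputable def sig (κ lam : Char) : ℂ :=
  Complex.exp ((Real.pi : ℂ) * Complex.I *
    (((∑ i, κ.1 i * lam.2 i : ℤ) : ℂ) - ((∑ i, κ.2 i * lam.1 i : ℤ) : ℂ)))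

/-- Componentwise mod-2 sum of characteristics. -/
def addChar (κ lam : Char) : Char :=
  (fun i => (κ.1 i + lam.1 i) % 2, fun i => (κ.2 i + lam.2 i) % 2)

/-- For each even characteristic `δ_d`, the ordering `(k₁,…,k₆)` of `{1,…,6}` (0-indexed) whose
first three entries form the triad of odd characteristics with `δ_d = ν_{k₁}+ν_{k₂}+ν_{k₃}`
and whose last three are the complementary indices. -/
def triad : Fin 10 → Fin 6 → Fin 6 :=
  ![![0,3,5,1,2,4], ![0,1,5,2,3,4], ![0,1,4,2,3,5], ![0,3,4,1,2,5], ![0,1,3,2,4,5],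
    ![0,4,5,1,2,3], ![0,1,2,3,4,5], ![0,2,3,1,4,5], ![0,2,5,1,3,4], ![0,2,4,1,3,5]]

/-- D'Hoker–Phong's `Ξ₆[δ]`. -/
noncomputable def Xi6 (d : Fin 10) (τ : Mat2) : ℂ :=
  ∑ i : Fin 3, ∑ j : Fin 3,
    if i < j then
      sig (νodd (triad d (Fin.castLE (by norm_num) i))) (νodd (triad d (Fin.castLE (by norm_num) j))) *
        ∏ m : Fin 3,
          theta (addChar (addChar (νodd (triad d (Fin.castLE (by norm_num) i)))
              (νodd (triad d (Fin.castLE (by norm_num) j))))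
            (νodd (triad d (⟨m.1 + 3, by omega⟩ : Fin 6)))) τ ^ 4
    else 0

/-- The formal derivative `∂I₄/∂θ⁴[δ]` of the Igusa quartic with respect to the ten fourth
powers of the even theta constants, regarded as independent variables. -/
noncomputable def Dd (d : Fin 10) (τ : Mat2) : ℂ :=
  (1 / 48 : ℂ) *
    (theta (δev d) τ ^ 4 * (∑ d' : Fin 10, theta (δev d') τ ^ 8) - 4 * theta (δev d) τ ^ 12)

/-- `f_δ = 2Ξ₆[δ] − ∂I₄/∂θ⁴[δ]`. -/
noncomputable def fδ (d : Fin 10) (τ : Mat2) : ℂ := 2 * Xi6 d τ - Dd d τ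

/-- `Ψ₆`, the weight-6 modular form. -/
noncomputable def Ψ6 (τ : Mat2) : ℂ :=
  P0 τ ^ 3 - 9 * P0 τ * (P1 τ ^ 2 + P2 τ ^ 2 + P3 τ ^ 2 - 4 * P4 τ ^ 2)
    + 54 * (P1 τ * P2 τ * P3 τ)

/-- `Ψ₁₀`, the weight-10 modular form. -/
noncomputable def Ψ10 (τ : Mat2) : ℂ := ∏ d : Fin 10, theta (δev d) τ ^ 2

/-- A characteristic is even when `a·b` is even. -/
def IsEvenChar (κ : Char) : Prop := (∑ i, κ.1 i * κ.2 i) % 2 = 0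

/-- A characteristic is odd when `a·b` is odd. -/
def IsOddChar (κ : Char) : Prop := (∑ i, κ.1 i * κ.2 i) % 2 = 1

/-- The formal partial derivative `∂I₄/∂xᵢ` evaluated at `(P₀(τ),…,P₄(τ))`. -/
noncomputable def dI4 (i : Fin 5) (τ : Mat2) : ℂ :=
  MvPolynomial.eval (fun k => Pv k τ) (MvPolynomial.pderiv i I4poly)

/-- The general term of the theta series. -/
noncomputable def thTerm (κ : Char) (τ : Mat2) (n : Fin 2 → ℤ) : ℂ :=
  Complex.exp ((Real.pi : ℂ) * Complex.I *
      ((∑ i, ∑ j, ((n i : ℂ) + (κ.1 i : ℂ) / 2) * τ i j * ((n j : ℂ) + (κ.1 j : ℂ) / 2))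
        + ∑ i, ((n i : ℂ) + (κ.1 i : ℂ) / 2) * (κ.2 i : ℂ)))

lemma theta_eq (κ : Char) (τ : Mat2) : theta κ τ = ∑' n, thTerm κ τ n := rfl

lemma summable_gauss (c : ℝ) (hc : 0 < c) (a : ℝ) :
    Summable (fun n : ℤ => Real.exp (-(Real.pi * c * ((n : ℝ) + a / 2) ^ 2))) := by
  have h := (summable_jacobiTheta₂_term_iff (((c * a / 2 : ℝ) : ℂ) * Complex.I)
    ((c : ℂ) * Complex.I)).2 (by simpa using hc)
  have h2 := h.norm.mul_left (Real.exp (-(Real.pi * c * (a / 2) ^ 2)))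
  refine h2.congr (fun n => ?_)
  rw [norm_jacobiTheta₂_term, ← Real.exp_add]
  congr 1
  simp
  ring

lemma posdef_bound {τ : Mat2} (hτ : τ ∈ SiegelH2) :
    ∃ c : ℝ, 0 < c ∧ ∀ x y : ℝ, c * (x ^ 2 + y ^ 2) ≤
      x * (τ 0 0).im * x + x * (τ 0 1).im * y + (y * (τ 1 0).im * x + y * (τ 1 1).im * y) := by
  obtain ⟨hs, hp⟩ := hτ
  have h01 : τ 1 0 = τ 0 1 := congrFun (congrFun hs 0) 1
  have hd := hp.det_pos
  have hp0 : 0 < (τ 0 0).im := by simpa using hp.diag_pos (i := 0)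
  have hp1 : 0 < (τ 1 1).im := by simpa using hp.diag_pos (i := 1)
  rw [Matrix.det_fin_two] at hd
  simp only [Matrix.map_apply, h01] at hd
  rw [h01]
  generalize (τ 0 0).im = p at *
  generalize (τ 1 1).im = r at *
  generalize (τ 0 1).im = q at *
  refine ⟨(p * r - q * q) / (p + r), by positivity, fun x y => ?_⟩
  rw [div_mul_eq_mul_div, div_le_iff₀ (by positivity)]
  nlinarith [sq_nonneg (p * x + q * y), sq_nonneg (q * x + r * y)]

lemma norm_thTerm (κ : Char) (τ : Mat2) (n : Fin 2 → ℤ) :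
    ‖thTerm κ τ n‖ = Real.exp (-(Real.pi *
      (((n 0 : ℝ) + (κ.1 0 : ℝ) / 2) * (τ 0 0).im * ((n 0 : ℝ) + (κ.1 0 : ℝ) / 2) +
        ((n 0 : ℝ) + (κ.1 0 : ℝ) / 2) * (τ 0 1).im * ((n 1 : ℝ) + (κ.1 1 : ℝ) / 2) +
      (((n 1 : ℝ) + (κ.1 1 : ℝ) / 2) * (τ 1 0).im * ((n 0 : ℝ) + (κ.1 0 : ℝ) / 2) +
        ((n 1 : ℝ) + (κ.1 1 : ℝ) / 2) * (τ 1 1).im * ((n 1 : ℝ) + (κ.1 1 : ℝ) / 2))))) := by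
  have key : ∀ i, ((n i : ℂ) + (κ.1 i : ℂ) / 2) = (((n i : ℝ) + (κ.1 i : ℝ) / 2 : ℝ) : ℂ) := by
    intro i; push_cast; ring
  have key2 : ∀ i, (κ.2 i : ℂ) = ((κ.2 i : ℝ) : ℂ) := by
    intro i; push_cast; ring
  unfold thTerm
  simp only [key, key2, Fin.sum_univ_two]
  rw [Complex.norm_exp]
  congr 1
  generalize ((n 0 : ℝ) + (κ.1 0 : ℝ) / 2 : ℝ) = x
  generalize ((n 1 : ℝ) + (κ.1 1 : ℝ) / 2 : ℝ) = y
  simp [Complex.mul_re, Complex.mul_im]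

lemma summable_thTerm (κ : Char) {τ : Mat2} (hτ : τ ∈ SiegelH2) :
    Summable (fun n => ‖thTerm κ τ n‖) := by
  obtain ⟨c, hc, hb⟩ := posdef_bound hτ
  have h := Summable.mul_of_nonneg (summable_gauss c hc (κ.1 0)) (summable_gauss c hc (κ.1 1))
    (fun _ => (Real.exp_pos _).le) (fun _ => (Real.exp_pos _).le)
  have h' := (finTwoArrowEquiv ℤ).summable_iff.2 h
  refine Summable.of_nonneg_of_le (fun _ => norm_nonneg _) (fun n => ?_) h'
  rw [norm_thTerm]
  change _ ≤ Real.exp (-(Real.pi * c * ((n 0 : ℝ) + (κ.1 0 : ℝ) / 2) ^ 2)) *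
    Real.exp (-(Real.pi * c * ((n 1 : ℝ) + (κ.1 1 : ℝ) / 2) ^ 2))
  rw [← Real.exp_add]
  apply Real.exp_le_exp.2
  have := mul_le_mul_of_nonneg_left (hb ((n 0 : ℝ) + (κ.1 0 : ℝ) / 2)
    ((n 1 : ℝ) + (κ.1 1 : ℝ) / 2)) Real.pi_pos.le
  linarith

lemma two_smul_mem {τ : Mat2} (hτ : τ ∈ SiegelH2) : (2 : ℂ) • τ ∈ SiegelH2 := by
  obtain ⟨hs, hp⟩ := hτ
  refine ⟨by rw [Matrix.transpose_smul, hs], ?_⟩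
  have : ((2 : ℂ) • τ).map Complex.im = (2 : ℝ) • τ.map Complex.im := by
    ext i j; simp [Complex.mul_im]
  rw [this]
  exact hp.smul (by norm_num)

/-- The integer vector of a bit vector. -/
def bits (e : Fin 2 → Fin 2) (i : Fin 2) : ℤ := ((e i).val : ℤ)

/-- The componentwise exclusive-or with `a`. -/
def xorv (a : Fin 2 → ℤ) (e : Fin 2 → Fin 2) (i : Fin 2) : ℤ :=
  bits e i + a i - 2 * bits e i * a i

/-- The change of summation variables in the addition formula. -/
def chg (a : Fin 2 → ℤ) (x : (Fin 2 → Fin 2) × ((Fin 2 → ℤ) × (Fin 2 → ℤ))) :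
    (Fin 2 → ℤ) × (Fin 2 → ℤ) :=
  (fun i => x.2.1 i + x.2.2 i + bits x.1 i * (1 - a i),
   fun i => x.2.1 i - x.2.2 i - a i * (1 - bits x.1 i))

lemma chg_bij (a : Fin 2 → ℤ) (ha : ∀ i, a i = 0 ∨ a i = 1) : Function.Bijective (chg a) := by
  constructor
  · rintro ⟨e, k, l⟩ ⟨e', k', l'⟩ h
    simp only [chg, Prod.mk.injEq] at h
    obtain ⟨h1, h2⟩ := h
    have key : ∀ i, e i = e' i ∧ k i = k' i ∧ l i = l' i := by
      intro i
      have h1 := congrFun h1 i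
      have h2 := congrFun h2 i
      simp only [bits] at h1 h2
      have he := (e i).isLt
      have he' := (e' i).isLt
      rw [Fin.ext_iff]
      rcases ha i with h | h <;> rw [h] at h1 h2 <;> omega
    have e1 : e = e' := funext fun i => (key i).1
    have e2 : k = k' := funext fun i => (key i).2.1
    have e3 : l = l' := funext fun i => (key i).2.2
    rw [e1, e2, e3]
  · rintro ⟨n, m⟩
    have key : ∀ i, ∃ e : Fin 2, ∃ k l : ℤ, k + l + (e.val : ℤ) * (1 - a i) = n i ∧
        k - l - a i * (1 - (e.val : ℤ)) = m i := by
      intro i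
      rcases ha i with h | h <;> rw [h] <;> rcases Int.emod_two_eq_zero_or_one (n i + m i) with hp | hp
      · exact ⟨0, (n i + m i) / 2, (n i - m i) / 2, by simp; omega, by simp; omega⟩
      · exact ⟨1, (n i + m i - 1) / 2, (n i - m i - 1) / 2, by simp; omega, by simp; omega⟩
      · exact ⟨1, (n i + m i) / 2, (n i - m i) / 2, by simp; omega, by simp; omega⟩
      · exact ⟨0, (n i + m i + 1) / 2, (n i - m i - 1) / 2, by simp; omega, by simp; omega⟩
    choose e k l h using key
    refine ⟨(e, k, l), ?_⟩
    ext i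
    · exact (h i).1
    · exact (h i).2

lemma exp_even (m : ℤ) : Complex.exp ((Real.pi : ℂ) * Complex.I * (2 * (m : ℂ))) = 1 := by
  rw [show (Real.pi : ℂ) * Complex.I * (2 * (m : ℂ)) = m * (2 * Real.pi * Complex.I) by ring]
  exact Complex.exp_int_mul_two_pi_mul_I m

lemma term_mul (a b : Fin 2 → ℤ) (τ : Mat2) (e : Fin 2 → Fin 2) (k l : Fin 2 → ℤ) :
    thTerm (a, b) τ (chg a (e, k, l)).1 * thTerm (a, b) τ (chg a (e, k, l)).2 =
      Complex.exp ((Real.pi : ℂ) * Complex.I * (∑ i, (bits e i : ℂ) * (b i : ℂ))) *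
      (thTerm (bits e, ![0,0]) ((2 : ℂ) • τ) k * thTerm (xorv a e, ![0,0]) ((2 : ℂ) • τ) l) := by
  rw [← one_mul (Complex.exp _ * _), ← exp_even (k 0 * b 0 + k 1 * b 1)]
  unfold thTerm
  simp only [← Complex.exp_add]
  congr 1
  simp only [Fin.sum_univ_two, chg, xorv, Matrix.smul_apply, smul_eq_mul, Matrix.cons_val_zero,
    Matrix.cons_val_one]
  push_cast
  ring

theorem theta_sq (a b : Fin 2 → ℤ) (ha : ∀ i, a i = 0 ∨ a i = 1) {τ : Mat2} (hτ : τ ∈ SiegelH2) :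
    theta (a, b) τ ^ 2 = ∑ e : Fin 2 → Fin 2,
      Complex.exp ((Real.pi : ℂ) * Complex.I * (∑ i, (bits e i : ℂ) * (b i : ℂ))) *
      (Θf (bits e) τ * Θf (xorv a e) τ) := by
  have hS := summable_thTerm (a, b) hτ
  have hprod := summable_mul_of_summable_norm hS hS
  have hT : ∀ κ, Summable (fun n => ‖thTerm κ ((2 : ℂ) • τ) n‖) :=
    fun κ => summable_thTerm κ (two_smul_mem hτ)
  have hc := hprod.comp_injective (chg_bij a ha).1
  rw [sq, theta_eq, tsum_mul_tsum_of_summable_norm hS hS,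
    ← (Equiv.ofBijective _ (chg_bij a ha)).tsum_eq]
  simp only [Equiv.ofBijective_apply]
  have h2 := hc.tsum_prod
  simp only [Function.comp_def] at h2
  rw [h2, tsum_fintype]
  refine Finset.sum_congr rfl (fun e _ => ?_)
  rw [Θf, Θf, theta_eq, theta_eq, tsum_mul_tsum_of_summable_norm (hT _) (hT _), ← tsum_mul_left]
  refine tsum_congr (fun x => ?_)
  exact term_mul a b τ e x.1 x.2

/-- The sign `(-1)^m`. -/
noncomputable def sgn (m : ℤ) : ℂ := if m % 2 = 0 then 1 else -1

lemma exp_pi (m : ℤ) : Complex.exp ((Real.pi : ℂ) * Complex.I * (m : ℂ)) =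
    sgn m := by
  rw [show (Real.pi : ℂ) * Complex.I * (m : ℂ) = (m : ℂ) * (Real.pi * Complex.I) by ring,
    Complex.exp_int_mul, Complex.exp_pi_mul_I, sgn]
  split_ifs with h
  · exact (Int.even_iff.2 h).neg_one_zpow
  · exact (Int.not_even_iff_odd.1 (fun h' => h (Int.even_iff.1 h'))).neg_one_zpow

lemma sig_eq (κ lam : Char) : sig κ lam =
    sgn ((∑ i, κ.1 i * lam.2 i) - (∑ i, κ.2 i * lam.1 i)) := by
  rw [sig, ← exp_pi]
  push_cast
  rfl

/-- Explicit form of the addition formula, summed over the four bit vectors. -/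
theorem theta_sq' (a b : Fin 2 → ℤ) (ha : ∀ i, a i = 0 ∨ a i = 1) {τ : Mat2} (hτ : τ ∈ SiegelH2) :
    theta (a, b) τ ^ 2 =
      Θf ![0,0] τ * Θf ![a 0, a 1] τ +
      sgn (b 1) * (Θf ![0,1] τ * Θf ![a 0, 1 - a 1] τ) +
      sgn (b 0) * (Θf ![1,0] τ * Θf ![1 - a 0, a 1] τ) +
      sgn (b 0 + b 1) * (Θf ![1,1] τ * Θf ![1 - a 0, 1 - a 1] τ) := by
  rw [theta_sq a b ha hτ, ← (finTwoArrowEquiv (Fin 2)).symm.sum_comp, Fintype.sum_prod_type]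
  have h : ∀ e : Fin 2 → Fin 2,
      Complex.exp ((Real.pi : ℂ) * Complex.I * (∑ i, (bits e i : ℂ) * (b i : ℂ))) =
      sgn (bits e 0 * b 0 + bits e 1 * b 1) := by
    intro e
    rw [← exp_pi, Fin.sum_univ_two]
    push_cast
    rfl
  have hb : ∀ x y : Fin 2, bits ![x, y] = ![(x.val : ℤ), (y.val : ℤ)] := by
    intro x y; ext i; fin_cases i <;> rfl
  have hx : ∀ x y : Fin 2, xorv a ![x, y] =
      ![(x.val : ℤ) + a 0 - 2 * (x.val : ℤ) * a 0, (y.val : ℤ) + a 1 - 2 * (y.val : ℤ) * a 1] := by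
    intro x y; ext i; fin_cases i <;> rfl
  have h1 : ∀ z : ℤ, 1 + z - 2 * z = 1 - z := by intro z; ring
  have h0 : sgn 0 = 1 := by simp [sgn]
  simp_rw [h]
  simp only [Fin.sum_univ_two, finTwoArrowEquiv_symm_apply, hb, hx]
  simp [h1, h0]
  ring

lemma Xi6_eq (d : Fin 10) (τ : Mat2) (s : Fin 3 → ℤ) (c : Fin 3 → Fin 3 → Fin 10)
    (h : ∀ p : Fin 3,
      let i : Fin 6 := ![0, 0, 1] p
      let j : Fin 6 := ![1, 2, 2] p
      ((∑ r, (νodd (triad d i)).1 r * (νodd (triad d j)).2 r) -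
        (∑ r, (νodd (triad d i)).2 r * (νodd (triad d j)).1 r)) % 2 = s p ∧
      ∀ m : Fin 3, addChar (addChar (νodd (triad d i)) (νodd (triad d j)))
        (νodd (triad d (⟨m.1 + 3, by omega⟩ : Fin 6))) = δev (c p m)) :
    Xi6 d τ = ∑ p : Fin 3, sgn (s p) * (theta (δev (c p 0)) τ ^ 4 * theta (δev (c p 1)) τ ^ 4 *
      theta (δev (c p 2)) τ ^ 4) := by
  have hs : ∀ m : ℤ, sgn (m % 2) = sgn m := by intro m; simp [sgn]
  have e : Xi6 d τ = ∑ p : Fin 3,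
      sig (νodd (triad d (![0, 0, 1] p))) (νodd (triad d (![1, 2, 2] p))) *
      ∏ m : Fin 3, theta (addChar (addChar (νodd (triad d (![0, 0, 1] p)))
        (νodd (triad d (![1, 2, 2] p))))
        (νodd (triad d (⟨m.1 + 3, by omega⟩ : Fin 6)))) τ ^ 4 := by
    simp [Xi6, Fin.sum_univ_three]
  rw [e]
  refine Finset.sum_congr rfl (fun p _ => ?_)
  obtain ⟨h1, h2⟩ := h p
  simp only [h2]
  rw [sig_eq, ← hs, h1, Fin.prod_univ_three]

lemma dI4_eq (τ : Mat2) :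
    dI4 0 τ = 2 * P4 τ ^ 2 * P0 τ - 2 * (P1 τ * P2 τ * P3 τ) ∧
    dI4 1 τ = -2 * P4 τ ^ 2 * P1 τ + 2 * P1 τ * (P2 τ ^ 2 + P3 τ ^ 2) - 2 * (P0 τ * P2 τ * P3 τ) ∧
    dI4 2 τ = -2 * P4 τ ^ 2 * P2 τ + 2 * P2 τ * (P1 τ ^ 2 + P3 τ ^ 2) - 2 * (P0 τ * P1 τ * P3 τ) ∧
    dI4 3 τ = -2 * P4 τ ^ 2 * P3 τ + 2 * P3 τ * (P1 τ ^ 2 + P2 τ ^ 2) - 2 * (P0 τ * P1 τ * P2 τ) ∧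
    dI4 4 τ = 4 * P4 τ ^ 3 + 2 * P4 τ * (P0 τ ^ 2 - P1 τ ^ 2 - P2 τ ^ 2 - P3 τ ^ 2) := by
  have h2 : (2 : MvPolynomial (Fin 5) ℂ) = MvPolynomial.C 2 := (map_ofNat MvPolynomial.C 2).symm
  refine ⟨?_, ?_, ?_, ?_, ?_⟩ <;>
  · simp [dI4, I4poly, h2, MvPolynomial.pderiv_X, Pi.single_apply, Derivation.leibniz,
      Derivation.leibniz_pow, Pv]
    ring

/-- The squares of the ten even theta constants in terms of second order theta constants. -/
theorem ten_sq {τ : Mat2} (hτ : τ ∈ SiegelH2) (d : Fin 10) : theta (δev d) τ ^ 2 =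
    (let A := Θf ![0,0] τ
     let B := Θf ![0,1] τ
     let C := Θf ![1,0] τ
     let D := Θf ![1,1] τ
     ![A^2 + B^2 + C^2 + D^2, A^2 - B^2 + C^2 - D^2, A^2 + B^2 - C^2 - D^2,
       A^2 - B^2 - C^2 + D^2, 2 * (A * B + C * D), 2 * (A * B - C * D), 2 * (A * C + B * D),
       2 * (A * C - B * D), 2 * (A * D + B * C), 2 * (A * D - B * C)] : Fin 10 → ℂ) d := by
  have ha : ∀ d i, (δev d).1 i = 0 ∨ (δev d).1 i = 1 := by decide
  have h := theta_sq' (δev d).1 (δev d).2 (ha d) hτ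
  rw [Prod.mk.eta] at h
  rw [h]
  fin_cases d <;> simp [δev, sgn] <;> ring

/-- expansion of the ten `Ξ₆[δ]` on the derivatives of the Igusa quartic. -/
theorem statement5 : ∀ τ ∈ SiegelH2,
    Xi6 0 τ = 6 * dI4 0 τ + 2 * dI4 1 τ + 2 * dI4 2 τ + 2 * dI4 3 τ ∧
    Xi6 1 τ = 6 * dI4 0 τ - 2 * dI4 1 τ + 2 * dI4 2 τ - 2 * dI4 3 τ ∧
    Xi6 2 τ = 6 * dI4 0 τ + 2 * dI4 1 τ - 2 * dI4 2 τ - 2 * dI4 3 τ ∧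
    Xi6 3 τ = 6 * dI4 0 τ - 2 * dI4 1 τ - 2 * dI4 2 τ + 2 * dI4 3 τ ∧
    Xi6 4 τ = 4 * dI4 1 τ + 2 * dI4 4 τ ∧
    Xi6 5 τ = 4 * dI4 1 τ - 2 * dI4 4 τ ∧
    Xi6 6 τ = 4 * dI4 2 τ + 2 * dI4 4 τ ∧
    Xi6 7 τ = 4 * dI4 2 τ - 2 * dI4 4 τ ∧
    Xi6 8 τ = 4 * dI4 3 τ + 2 * dI4 4 τ ∧
    Xi6 9 τ = 4 * dI4 3 τ - 2 * dI4 4 τ := by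
  intro τ hτ
  have T : ∀ d, theta (δev d) τ ^ 4 = (theta (δev d) τ ^ 2) ^ 2 := fun d => by ring
  obtain ⟨d0, d1, d2, d3, d4⟩ := dI4_eq τ
  rw [d0, d1, d2, d3, d4]
  have s0 : sgn 0 = 1 := by simp [sgn]
  have s1 : sgn 1 = -1 := by simp [sgn]
  refine ⟨?_, ?_, ?_, ?_, ?_, ?_, ?_, ?_, ?_, ?_⟩
  · rw [Xi6_eq 0 τ ![1, 1, 1] ![![4, 7, 3], ![1, 8, 5], ![9, 2, 6]] (by decide)]
    simp only [Fin.sum_univ_three, T, ten_sq hτ]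
    simp [s0, s1, P0, P1, P2, P3, P4]
    ring
  · rw [Xi6_eq 1 τ ![0, 1, 0] ![![6, 4, 2], ![8, 0, 5], ![3, 9, 7]] (by decide)]
    simp only [Fin.sum_univ_three, T, ten_sq hτ]
    simp [s0, s1, P0, P1, P2, P3, P4]
    ring
  · rw [Xi6_eq 2 τ ![0, 0, 1] ![![6, 4, 1], ![9, 3, 5], ![0, 8, 7]] (by decide)]
    simp only [Fin.sum_univ_three, T, ten_sq hτ]
    simp [s0, s1, P0, P1, P2, P3, P4]
    ring
  · rw [Xi6_eq 3 τ ![1, 0, 0] ![![4, 7, 0], ![2, 9, 5], ![8, 1, 6]] (by decide)]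
    simp only [Fin.sum_univ_three, T, ten_sq hτ]
    simp [s0, s1, P0, P1, P2, P3, P4]
    ring
  · rw [Xi6_eq 4 τ ![0, 1, 0] ![![6, 2, 1], ![7, 3, 0], ![5, 8, 9]] (by decide)]
    simp only [Fin.sum_univ_three, T, ten_sq hτ]
    simp [s0, s1, P0, P1, P2, P3, P4]
    ring
  · rw [Xi6_eq 5 τ ![0, 1, 0] ![![2, 9, 3], ![1, 8, 0], ![7, 4, 6]] (by decide)]
    simp only [Fin.sum_univ_three, T, ten_sq hτ]
    simp [s0, s1, P0, P1, P2, P3, P4]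
    ring
  · rw [Xi6_eq 6 τ ![0, 0, 1] ![![4, 2, 1], ![7, 9, 8], ![5, 0, 3]] (by decide)]
    simp only [Fin.sum_univ_three, T, ten_sq hτ]
    simp [s0, s1, P0, P1, P2, P3, P4]
    ring
  · rw [Xi6_eq 7 τ ![0, 1, 0] ![![6, 9, 8], ![4, 3, 0], ![5, 1, 2]] (by decide)]
    simp only [Fin.sum_univ_three, T, ten_sq hτ]
    simp [s0, s1, P0, P1, P2, P3, P4]
    ring
  · rw [Xi6_eq 8 τ ![0, 1, 0] ![![6, 7, 9], ![1, 0, 5], ![3, 2, 4]] (by decide)]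
    simp only [Fin.sum_univ_three, T, ten_sq hτ]
    simp [s0, s1, P0, P1, P2, P3, P4]
    ring
  · rw [Xi6_eq 9 τ ![0, 0, 1] ![![6, 7, 8], ![2, 3, 5], ![0, 1, 4]] (by decide)]
    simp only [Fin.sum_univ_three, T, ten_sq hτ]
    simp [s0, s1, P0, P1, P2, P3, P4]
    ring

end TwoLoop
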